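/- arXiv:1709.03218 — 2 statements merged into one kernel-verified Lean document; each statement's English description precedes it below -/
import Mathlib

section
/- Let d = 3. For every integer n ≥ 1 and every k with 0 ≤ k ≤ 2n, a(n,k) = a(n−1,k−2) + 2·(3(n−1)−(k−1))·a(n−1,k−1) + (C(3(n−1)−k, 2) + 2k)·a(n−1,k) + (k+1)·(3(n−1)−(k+1))·a(n−1,k+1) + C(k+2, 2)·a(n−1,k+2), the identity being understood in the integers (whenever an integer coefficient is negative the corresponding a-value is 0). -/
/-- A generalized linear diagram on points `1,…,N` whose blocks all have size `d`:
a partition of `{1,…,N}` into blocks of size `d`. -/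
def IsLinearDiagram (N d : ℕ) (P : Finset (Finset ℕ)) : Prop :=
  (∀ b ∈ P, b.card = d) ∧ (∀ b ∈ P, ∀ x ∈ b, x ∈ Finset.Icc 1 N) ∧
    ∀ x ∈ Finset.Icc 1 N, ∃! b : Finset ℕ, b ∈ P ∧ x ∈ b

/-- The number of loops of a linear diagram on points `1,…,N`: indices `i` with
`1 ≤ i ≤ N - 1` such that `i` and `i + 1` lie in the same block. -/
noncomputable def linLoops (N : ℕ) (P : Finset (Finset ℕ)) : ℕ :=
  Set.ncard {i : ℕ | 1 ≤ i ∧ i + 1 ≤ N ∧ ∃ b ∈ P, i ∈ b ∧ i + 1 ∈ b}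

/-- `numA d n k` : the number of generalized linear diagrams of order `(n,d)`
with exactly `k` loops. -/
noncomputable def numA (d n k : ℕ) : ℕ :=
  Set.ncard {P : Finset (Finset ℕ) | IsLinearDiagram (n * d) d P ∧ linLoops (n * d) P = k}

/-- `numA` with an integer loop index, zero for negative indices. -/
noncomputable def numAZ (d n : ℕ) (k : ℤ) : ℕ :=
  if 0 ≤ k then numA d n k.toNat else 0

/-- Binomial coefficient with integer arguments: `0` when `y < 0` or `y > x`. -/
def iChoose (x y : ℤ) : ℕ :=
  if 0 ≤ y ∧ y ≤ x then x.toNat.choose y.toNat else 0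

/-- A generalized chord diagram on `ZMod N` whose blocks all have size `d`:
a partition of `ZMod N` into blocks of size `d`. -/
def IsChordDiagram (N d : ℕ) (P : Finset (Finset (ZMod N))) : Prop :=
  (∀ b ∈ P, b.card = d) ∧ ∀ x : ZMod N, ∃! b : Finset (ZMod N), b ∈ P ∧ x ∈ b

/-- A chord diagram is loopless if no residues `i`, `i+1` lie in the same block. -/
def ChordLoopless (N : ℕ) (P : Finset (Finset (ZMod N))) : Prop :=
  ∀ i : ZMod N, ∀ b ∈ P, i ∈ b → i + 1 ∈ b → False

/-- `numB d n` : the number of loopless generalized chord diagrams of order `(n,d)`. -/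
noncomputable def numB (d n : ℕ) : ℕ :=
  Set.ncard {P : Finset (Finset (ZMod (n * d))) |
    IsChordDiagram (n * d) d P ∧ ChordLoopless (n * d) P}

/-- The shift `i ↦ i + v` modulo `M`, on the representatives `1,…,M`. -/
def shiftMod (M v i : ℕ) : ℕ := if i + v ≤ M then i + v else i + v - M

/-- An `m`-symmetric linear diagram with sector size `v` and blocks of size `d`:
a partition of `{1,…,m·v}` into blocks of size `d` invariant under the shift by `v`
modulo `m·v`. -/
def IsMSymLinear (d m v : ℕ) (P : Finset (Finset ℕ)) : Prop :=
  IsLinearDiagram (m * v) d P ∧ ∀ b ∈ P, b.image (shiftMod (m * v) v) ∈ P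

/-- The number of loops lying in sector `s` (sectors numbered from `0`):
indices `i` with `s·v + 1 ≤ i ≤ (s+1)·v - 1` such that `i` and `i + 1` lie
in the same block. -/
noncomputable def sectorLoops (v : ℕ) (P : Finset (Finset ℕ)) (s : ℕ) : ℕ :=
  Set.ncard {i : ℕ | s * v + 1 ≤ i ∧ i + 1 ≤ (s + 1) * v ∧ ∃ b ∈ P, i ∈ b ∧ i + 1 ∈ b}

/-- `numAtil d m v k` : the number of `m`-symmetric linear diagrams with sector size `v`,
blocks of size `d`, and exactly `k` loops in each sector (`ã(v,k;m,d)`). -/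
noncomputable def numAtil (d m v k : ℕ) : ℕ :=
  Set.ncard {P : Finset (Finset ℕ) |
    IsMSymLinear d m v P ∧ ∀ s < m, sectorLoops v P s = k}

/-!
Remove the block through the last point of a diagram of order `n + 1` with blocks of size `e + 1`
and relabel the rest, which is a diagram `P` of order `n`, say on `N` points. The removed block
is recovered from the numbers `m g`, with sum `e`, of its other points lying in the gap between
points `g` and `g + 1` of `P`, for `0 ≤ g ≤ N`. Let `T` be the set of `g < N` with `m g ≠ 0`: there
are `e.choose #T` functions `m` for a given `T`. The removed block splits into one run per element
of `T` and a final run, so it has `e - #T` loops, while the loops of `P` in `T` are the ones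
destroyed by the insertion. Hence the number of loops of the big diagram is
`#(loops P \ T) + e - #T`, and summing over `s = #T` and `i = #(T ∩ loops P)` gives the recurrence.
-/

open Finset

section BlockPartition

variable {α β : Type*}

/-- A partition of the finite set `X` into blocks of size `d`; `IsLinearDiagram N d` is the case
`X = Icc 1 N`. -/
def IsBlockPartition (X : Finset α) (d : ℕ) (P : Finset (Finset α)) : Prop :=
  (∀ b ∈ P, #b = d) ∧ (∀ b ∈ P, b ⊆ X) ∧ ∀ x ∈ X, ∃! b, b ∈ P ∧ x ∈ b

lemma isLinearDiagram_iff_isBlockPartition {N d : ℕ} {P : Finset (Finset ℕ)} :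
    IsLinearDiagram N d P ↔ IsBlockPartition (Icc 1 N) d P :=
  Iff.rfl

lemma IsBlockPartition.eq_of_mem {X : Finset α} {d : ℕ} {P : Finset (Finset α)}
    (hP : IsBlockPartition X d P) {b c : Finset α} {x : α} (hb : b ∈ P) (hc : c ∈ P)
    (hxb : x ∈ b) (hxc : x ∈ c) : b = c :=
  (hP.2.2 x (hP.2.1 b hb hxb)).unique ⟨hb, hxb⟩ ⟨hc, hxc⟩

lemma isBlockPartition_insert_iff [DecidableEq α] {X B : Finset α} {P : Finset (Finset α)}
    (hXB : Disjoint X B) (hBP : B ∉ P) :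
    IsBlockPartition (X ∪ B) #B (insert B P) ↔ IsBlockPartition X #B P := by
  constructor
  · intro hQ
    have notMem_of_mem : ∀ b ∈ P, ∀ x ∈ b, x ∉ B := fun b hb x hxb hxB =>
      hBP (hQ.eq_of_mem (mem_insert_of_mem hb) (mem_insert_self B P) hxb hxB ▸ hb)
    refine ⟨fun b hb => hQ.1 b (mem_insert_of_mem hb), fun b hb x hxb =>
      (mem_union.1 (hQ.2.1 b (mem_insert_of_mem hb) hxb)).resolve_right (notMem_of_mem b hb x hxb),
      fun x hx => ?_⟩
    obtain ⟨b, ⟨hb, hxb⟩, -⟩ := hQ.2.2 x (mem_union_left B hx)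
    have hbP : b ∈ P := mem_of_mem_insert_of_ne hb
      (by rintro rfl; exact disjoint_left.1 hXB hx hxb)
    exact ⟨b, ⟨hbP, hxb⟩, fun c hc => hQ.eq_of_mem (mem_insert_of_mem hc.1) hb hc.2 hxb⟩
  · intro hP
    refine ⟨forall_mem_insert _ _ _ |>.2 ⟨rfl, hP.1⟩, forall_mem_insert _ _ _ |>.2
      ⟨subset_union_right, fun b hb => (hP.2.1 b hb).trans subset_union_left⟩, fun x hx => ?_⟩
    rcases mem_union.1 hx with hxX | hxB
    · obtain ⟨b, ⟨hb, hxb⟩, huniq⟩ := hP.2.2 x hxX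
      refine ⟨b, ⟨mem_insert_of_mem hb, hxb⟩, fun c ⟨hc, hxc⟩ => huniq c ⟨?_, hxc⟩⟩
      exact mem_of_mem_insert_of_ne hc (by rintro rfl; exact disjoint_left.1 hXB hxX hxc)
    · refine ⟨B, ⟨mem_insert_self B P, hxB⟩, fun c ⟨hc, hxc⟩ => ?_⟩
      exact (mem_insert.1 hc).resolve_right
        fun hcP => disjoint_left.1 hXB (hP.2.1 c hcP hxc) hxB

/-- The image of a family of blocks under a relabelling of the points. -/
def mapBlocks (f : α ↪ β) (P : Finset (Finset α)) : Finset (Finset β) :=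
  P.map (mapEmbedding f).toEmbedding

lemma mem_mapBlocks {f : α ↪ β} {P : Finset (Finset α)} {b : Finset β} :
    b ∈ mapBlocks f P ↔ ∃ c ∈ P, c.map f = b := by
  simp [mapBlocks]

lemma mapBlocks_injective (f : α ↪ β) : Function.Injective (mapBlocks f) :=
  map_injective _

lemma isBlockPartition_mapBlocks_iff (f : α ↪ β) {X : Finset α} {d : ℕ} {P : Finset (Finset α)} :
    IsBlockPartition (X.map f) d (mapBlocks f P) ↔ IsBlockPartition X d P := by
  have existsUnique_iff : ∀ x,
      (∃! b, b ∈ mapBlocks f P ∧ f x ∈ b) ↔ ∃! c, c ∈ P ∧ x ∈ c := fun x => by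
    constructor
    · rintro ⟨_, ⟨hb, hxb⟩, huniq⟩
      obtain ⟨c, hc, rfl⟩ := mem_mapBlocks.1 hb
      refine ⟨c, ⟨hc, (mem_map' f).1 hxb⟩, fun c' ⟨hc', hxc'⟩ => map_injective f ?_⟩
      exact huniq _ ⟨mem_mapBlocks.2 ⟨c', hc', rfl⟩, (mem_map' f).2 hxc'⟩
    · rintro ⟨c, ⟨hc, hxc⟩, huniq⟩
      refine ⟨c.map f, ⟨mem_mapBlocks.2 ⟨c, hc, rfl⟩, (mem_map' f).2 hxc⟩, ?_⟩
      rintro _ ⟨hb, hxb⟩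
      obtain ⟨c', hc', rfl⟩ := mem_mapBlocks.1 hb
      rw [huniq c' ⟨hc', (mem_map' f).1 hxb⟩]
  simp only [IsBlockPartition, forall_mem_map, existsUnique_iff]
  simp only [mapBlocks, forall_mem_map, card_map, RelEmbedding.coe_toEmbedding, mapEmbedding_apply,
    map_subset_map]

lemma IsBlockPartition.exists_mapBlocks_eq {f : α ↪ β} {X : Finset α} {d : ℕ}
    {Q : Finset (Finset β)} (hQ : IsBlockPartition (X.map f) d Q) : ∃ P, mapBlocks f P = Q := by
  have hsub : Q ⊆ X.powerset.map (mapEmbedding f).toEmbedding := fun b hb => by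
    obtain ⟨c, hc, rfl⟩ := subset_map_iff.1 (hQ.2.1 b hb)
    exact mem_map_of_mem _ (mem_powerset.2 hc)
  obtain ⟨P, -, rfl⟩ := subset_map_iff.1 hsub
  exact ⟨P, rfl⟩

end BlockPartition

section Loops

/-- The loops of a block: the points of `b` whose successor is also in `b`. -/
def blockLoops (b : Finset ℕ) : Finset ℕ := {i ∈ b | i + 1 ∈ b}

/-- The loops of a family of blocks. Unlike in `linLoops`, no ground set is needed. -/
def loops (P : Finset (Finset ℕ)) : Finset ℕ := P.biUnion blockLoops

lemma mem_blockLoops {b : Finset ℕ} {i : ℕ} : i ∈ blockLoops b ↔ i ∈ b ∧ i + 1 ∈ b :=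
  mem_filter

lemma mem_loops {P : Finset (Finset ℕ)} {i : ℕ} : i ∈ loops P ↔ ∃ b ∈ P, i ∈ b ∧ i + 1 ∈ b := by
  simp [loops, mem_blockLoops]

lemma IsLinearDiagram.linLoops_eq {N d : ℕ} {P : Finset (Finset ℕ)}
    (hP : IsLinearDiagram N d P) : linLoops N P = #(loops P) := by
  rw [linLoops, ← Set.ncard_coe_finset]
  congr 1
  ext i
  rw [mem_coe, mem_loops]
  refine ⟨fun h => h.2.2, fun h => ?_⟩
  obtain ⟨b, hb, hi, hi'⟩ := h
  exact ⟨(mem_Icc.1 (hP.2.1 b hb i hi)).1, (mem_Icc.1 (hP.2.1 b hb _ hi')).2, b, hb, hi, hi'⟩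

lemma IsLinearDiagram.loops_subset_range {N d : ℕ} {P : Finset (Finset ℕ)}
    (hP : IsLinearDiagram N d P) : loops P ⊆ range N := fun i hi => by
  obtain ⟨b, hb, -, hi'⟩ := mem_loops.1 hi
  exact mem_range.2 (mem_Icc.1 (hP.2.1 b hb _ hi')).2

end Loops

section Shift

/-- The new label of point `i` after `m g` new points have been inserted into each gap `g`, where
gap `g` lies between the points `g` and `g + 1`. -/
def gapShift (m : ℕ →₀ ℕ) (i : ℕ) : ℕ := i + ∑ g ∈ range i, m g

variable {m : ℕ →₀ ℕ}

lemma gapShift_zero : gapShift m 0 = 0 := by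
  simp [gapShift]

lemma gapShift_succ (i : ℕ) : gapShift m (i + 1) = gapShift m i + m i + 1 := by
  simp only [gapShift, sum_range_succ]
  omega

lemma gapShift_strictMono (m : ℕ →₀ ℕ) : StrictMono (gapShift m) :=
  strictMono_nat_of_lt_succ fun i => by rw [gapShift_succ]; omega

lemma gapShift_injective : Function.Injective gapShift := fun m m' h => by
  ext g
  have hg := congrFun h g
  have hg' := congrFun h (g + 1)
  rw [gapShift_succ, gapShift_succ] at hg'
  omega

/-- `gapShift m` as an embedding. -/
def gapEmbedding (m : ℕ →₀ ℕ) : ℕ ↪ ℕ := ⟨gapShift m, (gapShift_strictMono m).injective⟩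

lemma gapEmbedding_apply (i : ℕ) : gapEmbedding m i = gapShift m i := rfl

lemma blockLoops_map_gapEmbedding (b : Finset ℕ) :
    blockLoops (b.map (gapEmbedding m)) = (blockLoops b \ m.support).map (gapEmbedding m) := by
  ext x
  simp only [mem_blockLoops, mem_map, mem_sdiff, gapEmbedding_apply, Finsupp.mem_support_iff,
    not_not]
  constructor
  · rintro ⟨⟨i, hi, rfl⟩, j, hj, hij⟩
    have hlt : i < j := (gapShift_strictMono m).lt_iff_lt.1 (by omega)
    have hle : gapShift m (i + 1) ≤ gapShift m j := (gapShift_strictMono m).monotone hlt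
    rw [gapShift_succ] at hle
    have hmi : m i = 0 := by omega
    have hj' : j = i + 1 := (gapShift_strictMono m).injective (by rw [gapShift_succ]; omega)
    exact ⟨i, ⟨⟨hi, hj' ▸ hj⟩, hmi⟩, rfl⟩
  · rintro ⟨i, ⟨⟨hi, hi'⟩, hmi⟩, rfl⟩
    exact ⟨⟨i, hi, rfl⟩, i + 1, hi', by rw [gapShift_succ, hmi, add_zero]⟩

lemma loops_mapBlocks_gapEmbedding (P : Finset (Finset ℕ)) :
    loops (mapBlocks (gapEmbedding m) P) = (loops P \ m.support).map (gapEmbedding m) := by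
  ext x
  simp only [loops, mem_biUnion, mem_mapBlocks, exists_exists_and_eq_and,
    blockLoops_map_gapEmbedding, mem_map, mem_sdiff]
  grind

end Shift

section NewBlock

/-- The set of new points when `m g` points are inserted into each gap `g ≤ N` of `1, …, N`,
followed by one more point at the very end; there are `e + 1` of them if the `m g` add up to `e`. -/
def newBlock (N e : ℕ) (m : ℕ →₀ ℕ) : Finset ℕ :=
  Icc 1 (N + e + 1) \ (Icc 1 N).map (gapEmbedding m)

variable {N e : ℕ} {m : ℕ →₀ ℕ}

lemma gapShift_of_lt (hm : m ∈ finsuppAntidiag (range (N + 1)) e) {i : ℕ} (hi : N < i) :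
    gapShift m i = i + e := by
  obtain ⟨hsum, hsupp⟩ := mem_finsuppAntidiag.1 hm
  rw [gapShift, ← hsum]
  congr 1
  refine (sum_subset (range_subset_range.2 hi) fun g _ hg => ?_).symm
  exact Finsupp.notMem_support_iff.1 fun h => hg (hsupp h)

lemma gapShift_add_le (hm : m ∈ finsuppAntidiag (range (N + 1)) e) {i : ℕ} (hi : i ≤ N) :
    gapShift m i + m i ≤ N + e := by
  have hle := (gapShift_strictMono m).monotone (Nat.succ_le_succ hi)
  rw [Nat.succ_eq_add_one, gapShift_succ, gapShift_of_lt hm (Nat.lt_succ_self N)] at hle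
  omega

lemma map_gapEmbedding_subset (hm : m ∈ finsuppAntidiag (range (N + 1)) e) :
    (Icc 1 N).map (gapEmbedding m) ⊆ Icc 1 (N + e) := fun x hx => by
  obtain ⟨i, hi, rfl⟩ := mem_map.1 hx
  rw [mem_Icc] at hi ⊢
  have hle := gapShift_add_le hm hi.2
  have hpos := (gapShift_strictMono m).le_apply (x := i)
  rw [gapEmbedding_apply]
  omega

lemma map_gapEmbedding_subset_succ (hm : m ∈ finsuppAntidiag (range (N + 1)) e) :
    (Icc 1 N).map (gapEmbedding m) ⊆ Icc 1 (N + e + 1) :=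
  (map_gapEmbedding_subset hm).trans (Icc_subset_Icc_right (Nat.le_succ _))

lemma last_mem_newBlock (hm : m ∈ finsuppAntidiag (range (N + 1)) e) :
    N + e + 1 ∈ newBlock N e m := by
  refine mem_sdiff.2 ⟨mem_Icc.2 (by omega), fun h => ?_⟩
  have := (mem_Icc.1 (map_gapEmbedding_subset hm h)).2
  omega

lemma card_newBlock (hm : m ∈ finsuppAntidiag (range (N + 1)) e) : #(newBlock N e m) = e + 1 := by
  rw [newBlock, card_sdiff_of_subset (map_gapEmbedding_subset_succ hm), card_map, Nat.card_Icc,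
    Nat.card_Icc]
  omega

lemma map_gapEmbedding_union_newBlock (hm : m ∈ finsuppAntidiag (range (N + 1)) e) :
    (Icc 1 N).map (gapEmbedding m) ∪ newBlock N e m = Icc 1 (N + e + 1) :=
  union_sdiff_of_subset (map_gapEmbedding_subset_succ hm)

lemma range_gapShift (hm : m ∈ finsuppAntidiag (range (N + 1)) e) :
    Set.range (gapShift m) = {x | x ∈ newBlock N e m → x = N + e + 1} := by
  ext x
  simp only [Set.mem_range, Set.mem_ofPred_eq, newBlock, mem_sdiff, mem_Icc, mem_map,
    gapEmbedding_apply]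
  constructor
  · rintro ⟨i, rfl⟩ ⟨hx, hi⟩
    have hi_pos : 1 ≤ i := Nat.one_le_iff_ne_zero.2 (by rintro rfl; simp [gapShift_zero] at hx)
    have hNi : N < i := by
      by_contra! h
      exact hi ⟨i, ⟨hi_pos, h⟩, rfl⟩
    have := gapShift_of_lt hm hNi
    omega
  · intro hx
    rcases Nat.eq_zero_or_pos x with rfl | hpos
    · exact ⟨0, gapShift_zero⟩
    rcases le_or_gt x (N + e) with hle | hlt
    · by_contra! hne
      have := hx ⟨by omega, fun ⟨i, _, hi⟩ => hne i hi⟩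
      omega
    · exact ⟨x - e, by rw [gapShift_of_lt hm (by omega)]; omega⟩

lemma newBlock_injOn : Set.InjOn (newBlock N e) (finsuppAntidiag (range (N + 1)) e) :=
  fun m hm m' hm' h => gapShift_injective <| ((gapShift_strictMono m).range_inj
    (gapShift_strictMono m')).1 (by rw [range_gapShift hm, range_gapShift hm', h])

-- Injectivity suffices, since both sides are counted by `(N + e).choose e`.
lemma exists_newBlock_eq {B : Finset ℕ} (hB : B ⊆ Icc 1 (N + e + 1)) (hcard : #B = e + 1)
    (hlast : N + e + 1 ∈ B) : ∃ m ∈ finsuppAntidiag (range (N + 1)) e, newBlock N e m = B := by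
  have erase_mem : ∀ C ⊆ Icc 1 (N + e + 1), #C = e + 1 → N + e + 1 ∈ C →
      C.erase (N + e + 1) ∈ powersetCard e (Icc 1 (N + e)) := fun C hC hcardC hlastC => by
    refine mem_powersetCard.2 ⟨fun x hx => ?_, by rw [card_erase_of_mem hlastC, hcardC]; rfl⟩
    have := mem_Icc.1 (hC (mem_of_mem_erase hx))
    have := ne_of_mem_erase hx
    rw [mem_Icc]
    omega
  have hsurj : Set.SurjOn (fun m => (newBlock N e m).erase (N + e + 1))
      (finsuppAntidiag (range (N + 1)) e) (powersetCard e (Icc 1 (N + e))) := by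
    refine surjOn_of_injOn_of_card_le _
      (fun m hm => erase_mem _ sdiff_subset (card_newBlock hm) (last_mem_newBlock hm))
      (fun m hm m' hm' h => newBlock_injOn hm hm' ?_) ?_
    · rw [← insert_erase (last_mem_newBlock hm), ← insert_erase (last_mem_newBlock hm')]
      exact congrArg (insert (N + e + 1)) h
    · rw [card_powersetCard, card_finsuppAntidiag_nat_eq_choose, Nat.card_Icc, card_range]
      exact (congrArg (Nat.choose · e) (by omega)).le
  obtain ⟨m, hm, hmB⟩ := hsurj (erase_mem B hB hcard hlast)
  refine ⟨m, hm, ?_⟩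
  rw [← insert_erase (last_mem_newBlock hm), ← insert_erase hlast]
  exact congrArg (insert (N + e + 1)) hmB

-- A new point `x ≤ N + e` fails to be a loop exactly when it is the last one in some gap `g < N`.
lemma newBlock_sdiff_blockLoops (hm : m ∈ finsuppAntidiag (range (N + 1)) e) :
    (newBlock N e m).erase (N + e + 1) \ blockLoops (newBlock N e m) =
      (m.support.erase N).image fun g => gapShift m g + m g := by
  have hmono := gapShift_strictMono m
  ext x
  simp only [mem_sdiff, mem_erase, mem_blockLoops, mem_image, Finsupp.mem_support_iff]
  constructor
  · rintro ⟨⟨hx, hxB⟩, hx'⟩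
    have hx_succ : x + 1 ∉ newBlock N e m := fun h => hx' ⟨hxB, h⟩
    simp only [newBlock, mem_sdiff, mem_Icc, mem_map, not_and, not_not] at hxB hx_succ
    obtain ⟨j, hj, hjx⟩ := hx_succ (by omega)
    obtain ⟨g, rfl⟩ := Nat.exists_eq_add_of_le' hj.1
    rw [gapEmbedding_apply, gapShift_succ] at hjx
    refine ⟨g, ⟨by omega, fun hg => hxB.2 ⟨g, ⟨?_, by omega⟩, ?_⟩⟩, by omega⟩
    · rcases Nat.eq_zero_or_pos g with rfl | hpos
      · rw [gapShift_zero] at hjx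
        omega
      · exact hpos
    · rw [gapEmbedding_apply]
      omega
  · rintro ⟨g, ⟨hgN, hg⟩, rfl⟩
    have hg_lt : g < N := by
      have := mem_range.1 ((mem_finsuppAntidiag.1 hm).2 (Finsupp.mem_support_iff.2 hg))
      omega
    have hle := gapShift_add_le hm hg_lt.le
    have hsucc : gapShift m g + m g + 1 ∉ newBlock N e m := fun h =>
      (mem_sdiff.1 h).2 (mem_map.2 ⟨g + 1, mem_Icc.2 ⟨by omega, hg_lt⟩, gapShift_succ g⟩)
    refine ⟨⟨by omega, mem_sdiff.2 ⟨mem_Icc.2 ⟨by omega, by omega⟩, fun h => ?_⟩⟩,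
      fun h => hsucc h.2⟩
    obtain ⟨j, -, hj⟩ := mem_map.1 h
    rw [gapEmbedding_apply] at hj
    have hgj : g < j := hmono.lt_iff_lt.1 (by omega)
    have hjg : j < g + 1 := hmono.lt_iff_lt.1 (by rw [gapShift_succ]; omega)
    omega

lemma card_blockLoops_newBlock (hm : m ∈ finsuppAntidiag (range (N + 1)) e) :
    #(blockLoops (newBlock N e m)) + #(m.support.erase N) = e := by
  have hsub : blockLoops (newBlock N e m) ⊆ (newBlock N e m).erase (N + e + 1) := fun x hx => by
    obtain ⟨hx, hx'⟩ := mem_blockLoops.1 hx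
    have := (mem_Icc.1 (mem_sdiff.1 hx').1).2
    exact mem_erase.2 ⟨by omega, hx⟩
  have hinj : Function.Injective fun g => gapShift m g + m g := fun g g' h =>
    Nat.succ_injective ((gapShift_strictMono m).injective
      (by rw [Nat.succ_eq_add_one, Nat.succ_eq_add_one, gapShift_succ, gapShift_succ]; exact
        congrArg (· + 1) h))
  have hcard := card_sdiff_add_card_eq_card hsub
  rw [newBlock_sdiff_blockLoops hm, card_image_of_injective _ hinj,
    card_erase_of_mem (last_mem_newBlock hm), card_newBlock hm] at hcard
  omega

end NewBlock

section InsertBlock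

/-- The diagram obtained from `P` by inserting the block `newBlock N e m` and relabelling the old
points increasingly. -/
def insertBlock (N e : ℕ) (m : ℕ →₀ ℕ) (P : Finset (Finset ℕ)) : Finset (Finset ℕ) :=
  insert (newBlock N e m) (mapBlocks (gapEmbedding m) P)

variable {N e : ℕ} {m : ℕ →₀ ℕ} {P : Finset (Finset ℕ)}

lemma newBlock_notMem_mapBlocks (hm : m ∈ finsuppAntidiag (range (N + 1)) e)
    (hP : IsLinearDiagram N (e + 1) P) : newBlock N e m ∉ mapBlocks (gapEmbedding m) P := by
  intro h
  have hsub := ((isBlockPartition_mapBlocks_iff (gapEmbedding m)).2 hP).2.1 _ h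
  exact (mem_sdiff.1 (last_mem_newBlock hm)).2 (hsub (last_mem_newBlock hm))

lemma isLinearDiagram_insertBlock (hm : m ∈ finsuppAntidiag (range (N + 1)) e)
    (hP : IsLinearDiagram N (e + 1) P) :
    IsLinearDiagram (N + e + 1) (e + 1) (insertBlock N e m P) := by
  have h := (isBlockPartition_insert_iff disjoint_sdiff (newBlock_notMem_mapBlocks hm hP)).2
    (card_newBlock hm ▸ (isBlockPartition_mapBlocks_iff (gapEmbedding m)).2 hP)
  rwa [← newBlock, map_gapEmbedding_union_newBlock hm, card_newBlock hm] at h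

lemma insertBlock_inj {m' : ℕ →₀ ℕ} {P' : Finset (Finset ℕ)}
    (hm : m ∈ finsuppAntidiag (range (N + 1)) e) (hm' : m' ∈ finsuppAntidiag (range (N + 1)) e)
    (hP : IsLinearDiagram N (e + 1) P) (hP' : IsLinearDiagram N (e + 1) P') :
    insertBlock N e m P = insertBlock N e m' P' ↔ m = m' ∧ P = P' := by
  refine ⟨fun h => ?_, fun ⟨hmm', hPP'⟩ => hmm' ▸ hPP' ▸ rfl⟩
  have hB : newBlock N e m = newBlock N e m' := (isLinearDiagram_iff_isBlockPartition.1
    (isLinearDiagram_insertBlock hm hP)).eq_of_mem (mem_insert_self _ _)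
    (h ▸ mem_insert_self _ _) (last_mem_newBlock hm) (last_mem_newBlock hm')
  obtain rfl := newBlock_injOn hm hm' hB
  refine ⟨rfl, mapBlocks_injective (gapEmbedding m) ?_⟩
  have h_erase := congrArg (erase · (newBlock N e m)) h
  simpa only [insertBlock, erase_insert (newBlock_notMem_mapBlocks hm hP),
    erase_insert (newBlock_notMem_mapBlocks hm hP')] using h_erase

lemma IsLinearDiagram.exists_insertBlock_eq {Q : Finset (Finset ℕ)}
    (hQ : IsLinearDiagram (N + e + 1) (e + 1) Q) :
    ∃ m ∈ finsuppAntidiag (range (N + 1)) e, ∃ P, IsLinearDiagram N (e + 1) P ∧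
      insertBlock N e m P = Q := by
  obtain ⟨B, ⟨hBQ, hlast⟩, -⟩ := hQ.2.2 (N + e + 1) (mem_Icc.2 (by omega))
  obtain ⟨m, hm, rfl⟩ := exists_newBlock_eq (hQ.2.1 B hBQ) (hQ.1 B hBQ) hlast
  have herase : IsBlockPartition ((Icc 1 N).map (gapEmbedding m)) (e + 1)
      (Q.erase (newBlock N e m)) := by
    rw [← card_newBlock hm]
    refine (isBlockPartition_insert_iff disjoint_sdiff (notMem_erase _ _)).1 ?_
    rw [← newBlock, insert_erase hBQ, map_gapEmbedding_union_newBlock hm, card_newBlock hm]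
    exact hQ
  obtain ⟨P, hP⟩ := herase.exists_mapBlocks_eq
  refine ⟨m, hm, P, (isBlockPartition_mapBlocks_iff (gapEmbedding m)).1 (hP ▸ herase), ?_⟩
  rw [insertBlock, hP, insert_erase hBQ]

lemma card_loops_insertBlock (hm : m ∈ finsuppAntidiag (range (N + 1)) e)
    (hP : IsLinearDiagram N (e + 1) P) :
    #(loops (insertBlock N e m P)) + #(m.support.erase N) = #(loops P \ m.support.erase N) + e := by
  have hsdiff : loops P \ m.support = loops P \ m.support.erase N := by
    have hN : N ∉ loops P := fun h => by simpa using hP.loops_subset_range h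
    grind
  have hdisj : Disjoint (blockLoops (newBlock N e m))
      (loops (mapBlocks (gapEmbedding m) P)) := disjoint_left.2 fun x hx hx' => by
    obtain ⟨b, hb, hxb, -⟩ := mem_loops.1 hx'
    exact (mem_sdiff.1 (mem_blockLoops.1 hx).1).2
      (((isBlockPartition_mapBlocks_iff (gapEmbedding m)).2 hP).2.1 b hb hxb)
  have hcard : #(loops (insertBlock N e m P)) =
      #(blockLoops (newBlock N e m)) + #(loops P \ m.support.erase N) := by
    rw [← hsdiff, ← card_map (s := loops P \ _) (gapEmbedding m), ← loops_mapBlocks_gapEmbedding,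
      ← card_union_of_disjoint hdisj, insertBlock, loops, biUnion_insert, loops]
  have := card_blockLoops_newBlock hm
  omega

end InsertBlock

section Counting

variable {α : Type*} [DecidableEq α]

lemma card_filter_le_finsuppAntidiag {A : Finset α} {f : α →₀ ℕ} (hf : f.support ⊆ A) {e : ℕ}
    (he : ∑ x ∈ A, f x ≤ e) :
    #{m ∈ finsuppAntidiag A e | f ≤ m} = #(finsuppAntidiag A (e - ∑ x ∈ A, f x)) := by
  refine card_nbij' (· - f) (· + f) (fun m hm => ?_) (fun m hm => ?_) (fun m hm => ?_)
    (fun m _ => add_tsub_cancel_right m f)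
  · obtain ⟨hmA, hfm⟩ := mem_filter.1 hm
    obtain ⟨rfl, hsupp⟩ := mem_finsuppAntidiag.1 hmA
    refine mem_finsuppAntidiag.2 ⟨sum_tsub_distrib _ fun x _ => hfm x, ?_⟩
    exact (Finsupp.support_mono tsub_le_self).trans hsupp
  · obtain ⟨hsum, hsupp⟩ := mem_finsuppAntidiag.1 hm
    refine mem_filter.2 ⟨mem_finsuppAntidiag.2 ⟨?_, ?_⟩, le_add_self⟩
    · simp only [Finsupp.coe_add, Pi.add_apply, sum_add_distrib, hsum]
      omega
    · exact Finsupp.support_add.trans (union_subset hsupp hf)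
  · exact tsub_add_cancel_of_le (mem_filter.1 hm).2

-- Such an `m` is the indicator function of `T` plus an arbitrary function on `insert a T`.
lemma card_filter_finsuppAntidiag_support_erase {a : α} {A T : Finset α} (ha : a ∉ A) (hT : T ⊆ A)
    (e : ℕ) : #{m ∈ finsuppAntidiag (insert a A) e | m.support.erase a = T} = e.choose #T := by
  have haT : a ∉ T := fun h => ha (hT h)
  let f : α →₀ ℕ := Finsupp.indicator T fun _ _ => 1
  have f_apply : ∀ x, f x = if x ∈ T then 1 else 0 := fun x => by
    simp [f, Finsupp.indicator_apply]
  have f_sum : ∑ x ∈ insert a T, f x = #T := by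
    simp [f_apply, inter_eq_right.2 (subset_insert a T)]
  have f_support : f.support ⊆ insert a T :=
    (Finsupp.support_indicator_subset _ _).trans (subset_insert a T)
  have hfilter : {m ∈ finsuppAntidiag (insert a A) e | m.support.erase a = T} =
      {m ∈ finsuppAntidiag (insert a T) e | f ≤ m} := by
    ext m
    have f_le_iff : f ≤ m ↔ T ⊆ m.support := by
      simp only [Finsupp.le_def, f_apply, subset_iff, Finsupp.mem_support_iff]
      grind
    simp only [mem_filter, mem_finsuppAntidiag', f_le_iff, and_assoc]
    grind
  rw [hfilter]
  rcases lt_or_ge e #T with hlt | hle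
  · rw [Nat.choose_eq_zero_of_lt hlt, card_eq_zero, filter_eq_empty_iff]
    intro m hm hfm
    have := sum_le_sum fun x (_ : x ∈ insert a T) => hfm x
    rw [f_sum, (mem_finsuppAntidiag.1 hm).1] at this
    omega
  · rw [card_filter_le_finsuppAntidiag f_support (f_sum.trans_le hle), f_sum,
      card_finsuppAntidiag_nat_eq_choose, card_insert_of_notMem haT, ← Nat.choose_symm hle]
    congr 1
    omega

lemma sum_finsuppAntidiag_support_erase {M : Type*} [AddCommMonoid M] {a : α} {A : Finset α}
    (ha : a ∉ A) (e : ℕ) (F : Finset α → M) :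
    ∑ m ∈ finsuppAntidiag (insert a A) e, F (m.support.erase a) =
      ∑ s ∈ range (e + 1), e.choose s • ∑ T ∈ powersetCard s A, F T := by
  have hsupp : ∀ m ∈ finsuppAntidiag (insert a A) e, m.support.erase a ∈ A.powerset :=
    fun m hm => mem_powerset.2 (subset_insert_iff.1 (mem_finsuppAntidiag.1 hm).2)
  calc ∑ m ∈ finsuppAntidiag (insert a A) e, F (m.support.erase a)
      = ∑ T ∈ A.powerset, e.choose #T • F T := by
        rw [← sum_fiberwise_of_maps_to hsupp]
        refine sum_congr rfl fun T hT => ?_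
        rw [← card_filter_finsuppAntidiag_support_erase ha (mem_powerset.1 hT), ← sum_const]
        exact sum_congr rfl fun m hm => by rw [(mem_filter.1 hm).2]
    _ = ∑ s ∈ range (#A + 1), e.choose s • ∑ T ∈ powersetCard s A, F T := by
        rw [sum_powerset]
        refine sum_congr rfl fun s _ => ?_
        rw [smul_sum]
        exact sum_congr rfl fun T hT => by rw [(mem_powersetCard.1 hT).2]
    _ = ∑ s ∈ range (e + 1), e.choose s • ∑ T ∈ powersetCard s A, F T := by
        have term_zero : ∀ s, e < s ∨ #A < s →
            e.choose s • ∑ T ∈ powersetCard s A, F T = 0 := by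
          rintro s (hs | hs)
          · rw [Nat.choose_eq_zero_of_lt hs, zero_smul]
          · rw [powersetCard_eq_empty.2 hs, sum_empty, smul_zero]
        rcases le_total #A e with h | h
        · exact sum_subset (range_subset_range.2 (by omega)) fun s _ hs =>
            term_zero s (Or.inr (by simpa using hs))
        · exact (sum_subset (range_subset_range.2 (by omega)) fun s _ hs =>
            term_zero s (Or.inl (by simpa using hs))).symm

lemma card_filter_powersetCard_card_inter (U L : Finset α) {s i : ℕ} (hi : i ≤ s) :
    #{T ∈ powersetCard s U | #(T ∩ L) = i} = (#(U ∩ L)).choose i * (#(U \ L)).choose (s - i) := by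
  have union_inter_sdiff : ∀ x ∈ powersetCard i (U ∩ L) ×ˢ powersetCard (s - i) (U \ L),
      ((x.1 ∪ x.2) ∩ L, (x.1 ∪ x.2) \ L) = x := fun x hx => by
    obtain ⟨h₁, h₂⟩ := mem_product.1 hx
    have hsub₁ := (mem_powersetCard.1 h₁).1
    have hsub₂ := (mem_powersetCard.1 h₂).1
    ext <;> grind
  rw [← card_powersetCard, ← card_powersetCard, ← card_product]
  refine card_nbij' (fun T => (T ∩ L, T \ L)) (fun x => x.1 ∪ x.2) (fun T hT => ?_) (fun x hx => ?_)
    (fun T _ => ?_) union_inter_sdiff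
  · obtain ⟨⟨hTU, rfl⟩, rfl⟩ := by simpa only [mem_coe, mem_filter, mem_powersetCard] using hT
    exact mem_product.2 ⟨mem_powersetCard.2 ⟨inter_subset_inter_right hTU, rfl⟩,
      mem_powersetCard.2 ⟨sdiff_subset_sdiff hTU le_rfl, by rw [card_sdiff, inter_comm]⟩⟩
  · have h_inter : (x.1 ∪ x.2) ∩ L = x.1 := congrArg Prod.fst (union_inter_sdiff x hx)
    have h_sdiff : (x.1 ∪ x.2) \ L = x.2 := congrArg Prod.snd (union_inter_sdiff x hx)
    obtain ⟨h₁, h₂⟩ := mem_product.1 hx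
    obtain ⟨hsub₁, hcard₁⟩ := mem_powersetCard.1 h₁
    obtain ⟨hsub₂, hcard₂⟩ := mem_powersetCard.1 h₂
    refine mem_filter.2 ⟨mem_powersetCard.2 ⟨union_subset (hsub₁.trans inter_subset_left)
      (hsub₂.trans sdiff_subset), ?_⟩, (congrArg card h_inter).trans hcard₁⟩
    dsimp only
    rw [← card_inter_add_card_sdiff _ L, h_inter, h_sdiff, hcard₁, hcard₂]
    omega
  · exact (union_comm _ _).trans (sdiff_union_inter T L)

end Counting

section Recurrence

open Classical in
/-- The set of all diagrams on the points `1, …, N` with blocks of size `d`, as a `Finset`. -/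
noncomputable def linearDiagrams (N d : ℕ) : Finset (Finset (Finset ℕ)) :=
  {P ∈ (Icc 1 N).powerset.powerset | IsLinearDiagram N d P}

lemma mem_linearDiagrams {N d : ℕ} {P : Finset (Finset ℕ)} :
    P ∈ linearDiagrams N d ↔ IsLinearDiagram N d P := by
  simp only [linearDiagrams, mem_filter, mem_powerset, and_iff_right_iff_imp]
  exact fun hP b hb => mem_powerset.2 (hP.2.1 b hb)

lemma numA_eq_card (d n k : ℕ) :
    numA d n k = #{P ∈ linearDiagrams (n * d) d | #(loops P) = k} := by
  rw [numA, ← Set.ncard_coe_finset]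
  congr 1
  ext P
  simp only [coe_filter, mem_linearDiagrams, Set.mem_ofPred_eq]
  exact and_congr_right fun hP => by rw [hP.linLoops_eq]

lemma numAZ_eq_card (d n : ℕ) (l : ℤ) :
    numAZ d n l = #{P ∈ linearDiagrams (n * d) d | (#(loops P) : ℤ) = l} := by
  rw [numAZ]
  split_ifs with hl
  · lift l to ℕ using hl
    simp only [Int.toNat_natCast, numA_eq_card, Nat.cast_inj]
  · exact (card_eq_zero.2 (filter_eq_empty_iff.2 fun P _ h => hl (by omega))).symm

lemma IsLinearDiagram.card_loops_le {N d : ℕ} {P : Finset (Finset ℕ)}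
    (hP : IsLinearDiagram N d P) : #(loops P) ≤ N := by
  simpa using card_le_card hP.loops_subset_range

lemma numAZ_eq_zero_of_lt {d n : ℕ} {l : ℤ} (hl : n * d < l) : numAZ d n l = 0 := by
  rw [numAZ_eq_card, card_eq_zero, filter_eq_empty_iff]
  rintro P hP rfl
  have := (mem_linearDiagrams.1 hP).card_loops_le
  exact absurd hl (by exact_mod_cast this.not_gt)

lemma card_filter_linearDiagrams (N e k : ℕ) :
    #{Q ∈ linearDiagrams (N + e + 1) (e + 1) | #(loops Q) = k} =
      ∑ P ∈ linearDiagrams N (e + 1), #{m ∈ finsuppAntidiag (range (N + 1)) e |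
        #(loops P \ m.support.erase N) + e = k + #(m.support.erase N)} := by
  rw [← card_sigma]
  symm
  refine card_nbij (fun x => insertBlock N e x.2 x.1) ?_ ?_ ?_
  · rintro ⟨P, m⟩ h
    obtain ⟨hP, hm, hk⟩ := by
      simpa only [mem_coe, mem_sigma, mem_filter, mem_linearDiagrams] using h
    have := card_loops_insertBlock hm hP
    exact mem_filter.2 ⟨mem_linearDiagrams.2 (isLinearDiagram_insertBlock hm hP),
      by dsimp only; omega⟩
  · rintro ⟨P, m⟩ h ⟨P', m'⟩ h' heq
    simp only [mem_coe, mem_sigma, mem_filter, mem_linearDiagrams] at h h'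
    obtain ⟨rfl, rfl⟩ := (insertBlock_inj h.2.1 h'.2.1 h.1 h'.1).1 heq
    rfl
  · intro Q hQk
    obtain ⟨hQ, rfl⟩ := mem_filter.1 (mem_coe.1 hQk)
    obtain ⟨m, hm, P, hP, rfl⟩ := (mem_linearDiagrams.1 hQ).exists_insertBlock_eq
    exact ⟨⟨P, m⟩, mem_sigma.2 ⟨mem_linearDiagrams.2 hP, mem_filter.2
      ⟨hm, (card_loops_insertBlock hm hP).symm⟩⟩, rfl⟩

lemma card_filter_finsuppAntidiag_card_sdiff {N : ℕ} {L : Finset ℕ} (hL : L ⊆ range N) (e k : ℕ) :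
    #{m ∈ finsuppAntidiag (range (N + 1)) e |
        #(L \ m.support.erase N) + e = k + #(m.support.erase N)} =
      ∑ s ∈ range (e + 1), e.choose s * ∑ i ∈ range (s + 1),
        if #L + e = k + s + i then (#L).choose i * (N - #L).choose (s - i) else 0 := by
  rw [card_filter, range_add_one, sum_finsuppAntidiag_support_erase notMem_range_self e
    fun T => if #(L \ T) + e = k + #T then 1 else 0]
  refine sum_congr rfl fun s _ => congrArg (e.choose s * ·) ?_
  have inter_card_mem : ∀ T ∈ powersetCard s (range N), #(T ∩ L) ∈ range (s + 1) := fun T hT => by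
    have := card_le_card (inter_subset_left (s₁ := T) (s₂ := L))
    rw [(mem_powersetCard.1 hT).2] at this
    exact mem_range_succ_iff.2 this
  rw [← sum_fiberwise_of_maps_to inter_card_mem]
  refine sum_congr rfl fun i hi => ?_
  have hcard := card_filter_powersetCard_card_inter (range N) L (mem_range_succ_iff.1 hi)
  rw [inter_eq_right.2 hL, card_sdiff_of_subset hL, card_range] at hcard
  rw [← hcard, ← mul_boole, ← smul_eq_mul, ← sum_const]
  refine sum_congr rfl fun T hT => ?_
  obtain ⟨hTs, rfl⟩ := mem_filter.1 hT
  have := card_sdiff_add_card_inter L T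
  rw [inter_comm] at this
  rw [(mem_powersetCard.1 hTs).2]
  congr 1
  rw [eq_iff_iff]
  omega

lemma sum_ite_card_loops_eq (d n : ℕ) (l : ℤ) (i j : ℕ) :
    ∑ P ∈ linearDiagrams (n * d) d, (if (#(loops P) : ℤ) = l then
        ((#(loops P)).choose i : ℤ) * ((n * d - #(loops P)).choose j : ℤ) else 0) =
      Ring.choose l i * Ring.choose (n * d - l) j * numAZ d n l := by
  rw [← sum_filter, numAZ_eq_card, mul_comm _ (Nat.cast _), ← nsmul_eq_mul, ← sum_const]
  refine sum_congr rfl fun P hPl => ?_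
  obtain ⟨hP, rfl⟩ := mem_filter.1 hPl
  have hle := (mem_linearDiagrams.1 hP).card_loops_le
  rw [← Nat.cast_mul n, ← Nat.cast_sub hle, Ring.choose_natCast, Ring.choose_natCast]

-- Of the gaps below the last one, `s` receive points of the new block, and `i` of these `s` gaps
-- are loops of the old diagram, which are thereby destroyed.
theorem linear_rec_three_general (d n : ℕ) (hd : 1 ≤ d) (hn : 1 ≤ n) (k : ℕ) :
    (numA d n k : ℤ) = ∑ s ∈ range d, ((d - 1).choose s : ℤ) * ∑ i ∈ range (s + 1),
      Ring.choose (k + s + i - (d - 1) : ℤ) i *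
        Ring.choose ((n - 1) * d - (k + s + i - (d - 1)) : ℤ) (s - i) *
          numAZ d (n - 1) (k + s + i - (d - 1)) := by
  obtain ⟨e, rfl⟩ := Nat.exists_eq_add_of_le' hd
  obtain ⟨n, rfl⟩ := Nat.exists_eq_add_of_le' hn
  have hcount : numA (e + 1) (n + 1) k =
      ∑ P ∈ linearDiagrams (n * (e + 1)) (e + 1), ∑ s ∈ range (e + 1), e.choose s *
        ∑ i ∈ range (s + 1), if #(loops P) + e = k + s + i then
          (#(loops P)).choose i * (n * (e + 1) - #(loops P)).choose (s - i) else 0 := by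
    rw [numA_eq_card, Nat.succ_mul, ← add_assoc, card_filter_linearDiagrams]
    exact sum_congr rfl fun P hP => card_filter_finsuppAntidiag_card_sdiff
      (mem_linearDiagrams.1 hP).loops_subset_range e k
  rw [hcount, sum_comm]
  push_cast
  refine sum_congr rfl fun s _ => ?_
  rw [← mul_sum, sum_comm]
  simp only [add_tsub_cancel_right]
  refine congrArg _ (sum_congr rfl fun i _ => ?_)
  have := sum_ite_card_loops_eq (e + 1) n (k + s + i - e) i (s - i)
  push_cast at this
  rw [← this]
  refine sum_congr rfl fun P _ => ?_
  congr 1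
  rw [eq_sub_iff_add_eq]
  norm_cast

lemma iChoose_eq_ringChoose {x : ℤ} (hx : 0 ≤ x) (y : ℕ) : (iChoose x y : ℤ) = Ring.choose x y := by
  lift x to ℕ using hx
  rw [iChoose, Ring.choose_natCast]
  split_ifs with h
  · rfl
  · rw [Nat.choose_eq_zero_of_lt (by omega)]

lemma iChoose_mul_numAZ (d n : ℕ) (l : ℤ) (y : ℕ) :
    (iChoose (n * d - l) y : ℤ) * numAZ d n l = Ring.choose (n * d - l : ℤ) y * numAZ d n l := by
  rcases lt_or_ge (n * d : ℤ) l with h | h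
  · rw [numAZ_eq_zero_of_lt h, Nat.cast_zero, mul_zero, mul_zero]
  · rw [iChoose_eq_ringChoose (sub_nonneg.2 h)]

end Recurrence

/-- the recurrence for `a(n,k)` when `d = 3`, as an identity of integers. -/
theorem linear_rec_three (n : ℕ) (hn : 1 ≤ n) (k : ℕ) (hk : k ≤ 2 * n) :
    (numA 3 n k : ℤ) =
      (numAZ 3 (n - 1) ((k : ℤ) - 2) : ℤ) +
        2 * (3 * ((n : ℤ) - 1) - ((k : ℤ) - 1)) * (numAZ 3 (n - 1) ((k : ℤ) - 1) : ℤ) +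
        ((iChoose (3 * ((n : ℤ) - 1) - (k : ℤ)) 2 : ℤ) + 2 * (k : ℤ)) *
          (numAZ 3 (n - 1) (k : ℤ) : ℤ) +
        ((k : ℤ) + 1) * (3 * ((n : ℤ) - 1) - ((k : ℤ) + 1)) *
          (numAZ 3 (n - 1) ((k : ℤ) + 1) : ℤ) +
        (iChoose ((k : ℤ) + 2) 2 : ℤ) * (numAZ 3 (n - 1) ((k : ℤ) + 2) : ℤ) := by
  have hrec := linear_rec_three_general 3 n (by norm_num) hn k
  have hchoose_sub : (iChoose (3 * (n - 1) - k) 2 * numAZ 3 (n - 1) k : ℤ) =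
      Ring.choose (3 * (n - 1) - k : ℤ) 2 * numAZ 3 (n - 1) k := by
    simpa only [Nat.cast_sub hn, mul_comm, Nat.cast_ofNat, Nat.cast_one] using
      iChoose_mul_numAZ 3 (n - 1) k 2
  have hchoose_add : (iChoose (k + 2) 2 : ℤ) = Ring.choose (k + 2 : ℤ) 2 :=
    iChoose_eq_ringChoose (by omega) 2
  simp only [sum_range_succ, sum_range_zero, Nat.add_one_sub_one, Nat.cast_ofNat, Nat.cast_one,
    Nat.cast_zero, tsub_self, tsub_zero, zero_tsub, Int.reduceSub, Ring.choose_zero_right,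
    Ring.choose_one_right, Nat.choose_zero_right, Nat.choose_succ_self_right, Nat.choose_self,
    Nat.reduceAdd, zero_add, add_zero, one_mul, mul_one, add_sub_cancel_right] at hrec
  rw [show (k + 1 - 2 : ℤ) = k - 1 by ring, show (k + 1 + 1 - 2 : ℤ) = k by ring,
    show (k + 2 + 1 - 2 : ℤ) = k + 1 by ring, mul_comm ((n : ℤ) - 1) 3] at hrec
  linear_combination hrec - hchoose_sub - numAZ 3 (n - 1) (k + 2) * hchoose_add
end

section
/- Let d = 3. For every integer n ≥ 2, a(n,2) = 2·a(n,0) + (9n−10)·a(n−1,0) + 5·a(n−1,1) + 2·a(n−2,0). -/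
/-!
Labelling the `n` blocks of a diagram turns it into a word in which each of `n` letters occurs `d`
times, and every diagram arises from exactly `n!` words. A loop is an immediate repetition of a
letter. To count repetitions with weight `x`, cut the occurrences of each letter into runs, giving
every adjacency inside a run the weight `y = x - 1`; by inclusion-exclusion the runs may then be
arranged freely. Dividing by the factorial of the number of runs of each letter, the weight of a
letter becomes a polynomial in `t`, and the count is the image of the product of the weights under
`tⁿ ↦ n!`, so that `n! ∑ₖ a(n,k) xᵏ = ∫₀^∞ p(t)ⁿ e⁻ᵗ dt`. For `d = 3` this `p` is quadratic in `x`,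
`p = (t³/6 - t² + t) + (t² - 2t) x + t x²`, and the recurrence is one integration by parts.
-/

open Finset Polynomial Bivariate

section ExpMoment

/-- The `R`-linear functional `tⁿ ↦ n!` on polynomials, a formal version of
`f ↦ ∫₀^∞ f(t) e⁻ᵗ dt`. -/
noncomputable def expMoment (R : Type*) [CommSemiring R] : R[X] →ₗ[R] R :=
  lsum fun n ↦ (n.factorial : R) • LinearMap.id

variable {R : Type*} [CommSemiring R]

lemma expMoment_monomial (n : ℕ) (r : R) : expMoment R (monomial n r) = n.factorial * r := by
  simp [expMoment, lsum_apply, sum_monomial_index]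

lemma expMoment_one : expMoment R 1 = 1 := by
  simpa using expMoment_monomial (R := R) 0 1

lemma expMoment_C_mul (r : R) (f : R[X]) : expMoment R (C r * f) = r * expMoment R f := by
  rw [← smul_eq_C_mul, map_smul, smul_eq_mul]

lemma expMoment_derivative (f : R[X]) :
    expMoment R (derivative f) + f.coeff 0 = expMoment R f := by
  induction f using Polynomial.induction_on' with
  | add p q hp hq => rw [map_add, map_add, coeff_add, add_add_add_comm, hp, hq, map_add]
  | monomial n r =>
    cases n with
    | zero => rw [derivative_monomial, expMoment_monomial, expMoment_monomial]; simp
    | succ n =>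
      rw [derivative_monomial_succ, expMoment_monomial, expMoment_monomial,
        coeff_monomial_of_ne _ n.succ_ne_zero.symm, Nat.factorial_succ]
      push_cast
      ring

lemma coeff_expMoment (f : R[X][Y]) (k : ℕ) :
    (expMoment R[X] f).coeff k = expMoment R ((swap f).coeff k) := by
  induction f using Polynomial.induction_on' with
  | add p q hp hq => simp only [map_add, coeff_add, hp, hq]
  | monomial n p =>
    induction p using Polynomial.induction_on' with
    | add p q hp hq => simp only [map_add, coeff_add, hp, hq]
    | monomial m r =>
      rw [expMoment_monomial, swap_monomial_monomial, ← C_eq_natCast, coeff_C_mul,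
        coeff_monomial, coeff_monomial]
      split_ifs <;> simp [expMoment_monomial]

end ExpMoment

section Words

variable {ι : Type*} [DecidableEq ι]

/-- The number of positions of a word at which a letter is repeated immediately. -/
def wordLoops : List ι → ℕ
  | [] => 0
  | a :: l => wordLoops l + if l.head? = some a then 1 else 0

/-- The words with letter content `s`, i.e. the distinct rearrangements of `s`
(`Multiset.lists` repeats them). -/
def words (s : Multiset ι) : Finset (List ι) := s.lists.toFinset

@[simp]
lemma mem_words {s : Multiset ι} {l : List ι} : l ∈ words s ↔ (l : Multiset ι) = s := by
  simp [words, eq_comm]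

lemma words_zero : words (0 : Multiset ι) = {[]} := by
  ext l
  simp

lemma sum_words_eq_sum_cons {M : Type*} [AddCommMonoid M] {s : Multiset ι} (hs : s ≠ 0)
    (φ : List ι → M) :
    ∑ l ∈ words s, φ l = ∑ a ∈ s.toFinset, ∑ l ∈ words (s.erase a), φ (a :: l) := by
  rw [sum_sigma']
  symm
  refine sum_bij (fun p _ ↦ p.1 :: p.2) ?_ ?_ ?_ fun _ _ ↦ rfl
  · rintro ⟨a, l⟩ h
    obtain ⟨ha, hl⟩ : a ∈ s ∧ (l : Multiset ι) = s.erase a := by simpa using h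
    rw [mem_words, ← Multiset.cons_coe, hl, Multiset.cons_erase ha]
  · rintro ⟨a, l⟩ _ ⟨b, l'⟩ _ h
    simpa using h
  · intro l hl
    obtain rfl := mem_words.1 hl
    cases l with
    | nil => exact absurd rfl hs
    | cons a l => exact ⟨⟨a, l⟩, by simp, rfl⟩

variable {R : Type*} [CommRing R]

lemma sum_words_pow_wordLoops_cons (x : R) (a : ι) (s : Multiset ι) :
    ∑ l ∈ words s, x ^ wordLoops (a :: l) = ∑ l ∈ words s, x ^ wordLoops l +
      if a ∈ s then (x - 1) * ∑ l ∈ words (s.erase a), x ^ wordLoops (a :: l) else 0 := by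
  have split (l : List ι) : x ^ wordLoops (a :: l) =
      x ^ wordLoops l + (x - 1) * if l.head? = some a then x ^ wordLoops l else 0 := by
    rw [wordLoops]
    split_ifs <;> ring
  have head : ∑ l ∈ words s, (if l.head? = some a then x ^ wordLoops l else 0) =
      if a ∈ s then ∑ l ∈ words (s.erase a), x ^ wordLoops (a :: l) else 0 := by
    rcases eq_or_ne s 0 with rfl | hs
    · simp [words_zero]
    · rw [sum_words_eq_sum_cons hs]
      have (b : ι) : ∑ l ∈ words (s.erase b),
          (if (b :: l).head? = some a then x ^ wordLoops (b :: l) else 0) =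
          if b = a then ∑ l ∈ words (s.erase b), x ^ wordLoops (b :: l) else 0 := by
        split_ifs with h <;> simp [h]
      simp_rw [this, sum_ite_eq', Multiset.mem_toFinset]
  rw [sum_congr rfl fun l _ ↦ split l, sum_add_distrib, ← mul_sum, head, mul_ite, mul_zero]

end Words

section RunPoly

variable {R : Type*} [CommRing R] [Algebra ℚ R]

/-- The weight `∑ⱼ (k-1 choose j-1) y^(k-j) tʲ / j!` of a letter occurring `k` times: its
occurrences are cut into `j` runs, each of the `k - j` adjacencies inside runs having weight `y`. -/
noncomputable def runPoly (y : R) : ℕ → R[X]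
  | 0 => 1
  | k + 1 => ∑ j ∈ range (k + 1),
      C (algebraMap ℚ R (k.choose j / (j + 1).factorial) * y ^ (k - j)) * X ^ (j + 1)

@[simp]
lemma runPoly_zero (y : R) : runPoly y 0 = 1 := rfl

lemma coeff_runPoly_succ (y : R) (k j : ℕ) : (runPoly y (k + 1)).coeff (j + 1) =
    algebraMap ℚ R (k.choose j / (j + 1).factorial) * y ^ (k - j) := by
  simp only [runPoly, finsetSum_coeff, coeff_C_mul_X_pow, Nat.add_right_cancel_iff]
  rw [sum_ite_eq]
  split_ifs with h
  · rfl
  · rw [Nat.choose_eq_zero_of_lt (by simpa using h)]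
    simp

lemma coeff_zero_runPoly_succ (y : R) (k : ℕ) : (runPoly y (k + 1)).coeff 0 = 0 := by
  rw [runPoly, finsetSum_coeff]
  exact sum_eq_zero fun j _ ↦ by rw [coeff_C_mul_X_pow, if_neg j.succ_ne_zero.symm]

lemma coeff_derivative_runPoly_succ (y : R) (k j : ℕ) : (derivative (runPoly y (k + 1))).coeff j =
    algebraMap ℚ R (k.choose j / j.factorial) * y ^ (k - j) := by
  have : (k.choose j / j.factorial : ℚ) = k.choose j / (j + 1).factorial * (j + 1) := by
    rw [Nat.factorial_succ]
    push_cast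
    field_simp
  rw [coeff_derivative, coeff_runPoly_succ, this]
  simp only [map_mul, map_add, map_natCast, map_one]
  ring

lemma derivative_runPoly_succ (y : R) (k : ℕ) :
    derivative (runPoly y (k + 1)) = runPoly y k + C y * derivative (runPoly y k) := by
  ext j
  rw [coeff_derivative_runPoly_succ, coeff_add, coeff_C_mul]
  cases k with
  | zero => cases j <;> simp [coeff_one]
  | succ k =>
    rw [coeff_derivative_runPoly_succ]
    cases j with
    | zero => simp [coeff_zero_runPoly_succ, pow_succ']
    | succ j =>
      have pow_absorb : (k.choose (j + 1) : R) * y ^ (k - j) =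
          k.choose (j + 1) * (y * y ^ (k - (j + 1))) := by
        rcases le_or_gt (j + 1) k with h | h
        · rw [← pow_succ', show k - (j + 1) + 1 = k - j by omega]
        · simp [Nat.choose_eq_zero_of_lt h]
      rw [coeff_runPoly_succ, Nat.choose_succ_succ']
      simp only [Nat.cast_add, div_eq_mul_inv, map_add, map_mul, map_natCast,
        Nat.add_sub_add_right]
      linear_combination algebraMap ℚ R ((j + 1).factorial : ℚ)⁻¹ * pow_absorb

variable {ι : Type*} [Fintype ι] [DecidableEq ι]

/-- The product of the letter weights of the multiset `s`, whose moments count words with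
content `s`. -/
noncomputable def contentPoly (y : R) (s : Multiset ι) : R[X] := ∏ i, runPoly y (s.count i)

lemma prod_erase_runPoly_count_erase (y : R) (s : Multiset ι) (a : ι) :
    ∏ i ∈ univ.erase a, runPoly y ((s.erase a).count i) =
      ∏ i ∈ univ.erase a, runPoly y (s.count i) :=
  prod_congr rfl fun _ hi ↦ by rw [Multiset.count_erase_of_ne (ne_of_mem_erase hi)]

lemma contentPoly_eq_mul_prod_erase (y : R) (s : Multiset ι) (a : ι) :
    contentPoly y s = runPoly y (s.count a) * ∏ i ∈ univ.erase a, runPoly y (s.count i) :=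
  (mul_prod_erase _ _ (mem_univ a)).symm

lemma derivative_contentPoly (y : R) (s : Multiset ι) :
    derivative (contentPoly y s) = ∑ a ∈ s.toFinset,
      derivative (runPoly y (s.count a)) * ∏ i ∈ univ.erase a, runPoly y (s.count i) := by
  rw [contentPoly, derivative_prod_finset]
  symm
  refine (sum_subset (subset_univ _) fun a _ ha ↦ ?_).trans (sum_congr rfl fun _ _ ↦ mul_comm _ _)
  rw [Multiset.count_eq_zero_of_notMem (by simpa using ha)]
  simp

lemma expMoment_derivative_contentPoly (y : R) {s : Multiset ι} (hs : s ≠ 0) :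
    expMoment R (derivative (contentPoly y s)) = expMoment R (contentPoly y s) := by
  obtain ⟨a, ha⟩ := Multiset.exists_mem_of_ne_zero hs
  obtain ⟨k, hk⟩ := Nat.exists_eq_add_of_le' (Multiset.one_le_count_iff_mem.2 ha)
  have coeff_zero : (contentPoly y s).coeff 0 = 0 := by
    rw [contentPoly_eq_mul_prod_erase y s a, hk, mul_coeff_zero, coeff_zero_runPoly_succ, zero_mul]
  rw [← expMoment_derivative (contentPoly y s), coeff_zero, add_zero]

-- The two counts recurse into each other, since the weight of the first letter of a word depends on
-- the letter preceding the word; hence a single induction for both.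
lemma sum_words_eq_expMoment_and_cons (x : R) (s : Multiset ι) :
    ∑ l ∈ words s, x ^ wordLoops l = expMoment R (contentPoly (x - 1) s) ∧
    ∀ a, ∑ l ∈ words s, x ^ wordLoops (a :: l) =
      expMoment R (derivative (runPoly (x - 1) (s.count a + 1)) *
        ∏ i ∈ univ.erase a, runPoly (x - 1) (s.count i)) := by
  induction s using Multiset.strongInductionOn with
  | ih s ih =>
    have erased (a : ι) (ha : a ∈ s) : ∑ l ∈ words (s.erase a), x ^ wordLoops (a :: l) =
        expMoment R (derivative (runPoly (x - 1) (s.count a)) *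
          ∏ i ∈ univ.erase a, runPoly (x - 1) (s.count i)) := by
      rw [(ih _ (Multiset.erase_lt.2 ha)).2, prod_erase_runPoly_count_erase,
        Multiset.count_erase_self, Nat.sub_add_cancel (Multiset.one_le_count_iff_mem.2 ha)]
    have unprefixed : ∑ l ∈ words s, x ^ wordLoops l = expMoment R (contentPoly (x - 1) s) := by
      rcases eq_or_ne s 0 with rfl | hs
      · simp [words_zero, wordLoops, contentPoly, expMoment_one]
      · rw [sum_words_eq_sum_cons hs, ← expMoment_derivative_contentPoly _ hs,
          derivative_contentPoly, map_sum]
        exact sum_congr rfl fun a ha ↦ erased a (Multiset.mem_toFinset.1 ha)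
    refine ⟨unprefixed, fun a ↦ ?_⟩
    rw [sum_words_pow_wordLoops_cons, unprefixed, derivative_runPoly_succ, add_mul, map_add,
      contentPoly_eq_mul_prod_erase _ _ a, mul_assoc (C _), expMoment_C_mul]
    split_ifs with ha
    · rw [erased a ha]
    · simp [Multiset.count_eq_zero_of_notMem ha]

theorem sum_words_pow_wordLoops (x : R) (s : Multiset ι) :
    ∑ l ∈ words s, x ^ wordLoops l = expMoment R (contentPoly (x - 1) s) :=
  (sum_words_eq_expMoment_and_cons x s).1

end RunPoly

namespace IsLinearDiagram

variable {N d : ℕ} {P : Finset (Finset ℕ)}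

lemma eq_of_mem (hP : IsLinearDiagram N d P) {b c : Finset ℕ} (hb : b ∈ P) (hc : c ∈ P) {x : ℕ}
    (hxb : x ∈ b) (hxc : x ∈ c) : b = c :=
  (hP.2.2 x (hP.2.1 b hb x hxb)).unique ⟨hb, hxb⟩ ⟨hc, hxc⟩

lemma card_mul (hP : IsLinearDiagram N d P) : #P * d = N := by
  have union : P.biUnion id = Icc 1 N := by
    ext x
    rw [mem_biUnion]
    exact ⟨fun ⟨b, hb, hx⟩ ↦ hP.2.1 b hb x hx, fun hx ↦ (hP.2.2 x hx).exists⟩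
  have disjoint : (P : Set (Finset ℕ)).PairwiseDisjoint id := fun b hb c hc hbc ↦
    disjoint_left.2 fun _ hxb hxc ↦ hbc (hP.eq_of_mem hb hc hxb hxc)
  calc #P * d = ∑ b ∈ P, #(id b) := (sum_const_nat hP.1).symm
    _ = N := by rw [← card_biUnion disjoint, union, Nat.card_Icc, Nat.add_sub_cancel]

end IsLinearDiagram

section Blocks

variable {ι : Type*} [DecidableEq ι]

/-- The positions, counted from `1`, of the letter `a` in the word `l`. -/
def positions (l : List ι) (a : ι) : Finset ℕ :=
  {j ∈ range l.length | l[j]? = some a}.image (· + 1)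

lemma mem_positions {l : List ι} {a : ι} {x : ℕ} :
    x ∈ positions l a ↔ ∃ j, l[j]? = some a ∧ j + 1 = x := by
  simp only [positions, mem_image, mem_filter, mem_range]
  refine exists_congr fun j ↦ and_congr_left fun _ ↦ and_iff_right_of_imp fun h ↦ ?_
  exact (List.getElem?_eq_some_iff.1 h).1

lemma succ_mem_positions {l : List ι} {a : ι} {j : ℕ} :
    j + 1 ∈ positions l a ↔ l[j]? = some a := by
  simp [mem_positions]

lemma positions_injective : Function.Injective (positions : List ι → ι → Finset ℕ) := by
  intro l l' h
  refine List.ext_getElem? fun j ↦ Option.ext fun a ↦ ?_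
  rw [← succ_mem_positions, ← succ_mem_positions, h]

lemma card_positions (l : List ι) (a : ι) : #(positions l a) = l.count a := by
  rw [positions, card_image_of_injective _ (add_left_injective 1)]
  induction l with
  | nil => simp
  | cons b l ih =>
    rw [card_filter] at ih
    rw [card_filter, List.length_cons, sum_range_succ', List.count_cons]
    simp [ih]

lemma card_loop_positions_eq_wordLoops (l : List ι) :
    #{j ∈ range l.length | l[j]? = l[j + 1]?} = wordLoops l := by
  induction l with
  | nil => simp [wordLoops]
  | cons a l ih =>
    rw [card_filter] at ih
    rw [card_filter, List.length_cons, sum_range_succ', wordLoops, ← ih]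
    simp [List.head?_eq_getElem?, eq_comm]

lemma exists_positions_eq {N : ℕ} {B : ι → Finset ℕ} (hB : ∀ a, B a ⊆ Icc 1 N)
    (hB' : ∀ x ∈ Icc 1 N, ∃! a, x ∈ B a) : ∃ l : List ι, positions l = B := by
  choose letter mem_letter letter_unique using hB'
  let word : List ι :=
    List.ofFn fun j : Fin N ↦ letter (j + 1) (mem_Icc.2 ⟨Nat.succ_pos _, j.isLt⟩)
  refine ⟨word, funext fun a ↦ Finset.ext fun x ↦ ?_⟩
  simp only [word, mem_positions, List.getElem?_eq_some_iff, List.length_ofFn, List.getElem_ofFn]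
  constructor
  · rintro ⟨j, ⟨_, rfl⟩, rfl⟩
    exact mem_letter _ _
  · intro hx
    obtain ⟨hx1, hxN⟩ := mem_Icc.1 (hB a hx)
    obtain ⟨j, rfl⟩ := Nat.exists_eq_add_of_le' hx1
    exact ⟨j, ⟨hxN, (letter_unique _ _ a hx).symm⟩, rfl⟩

variable [Fintype ι]

/-- The partition of the positions of a word according to their letters. Letters that do not
occur contribute an empty block. -/
def blocks (l : List ι) : Finset (Finset ℕ) := univ.image (positions l)

lemma isLinearDiagram_blocks {l : List ι} {d : ℕ} (hl : ∀ a, l.count a = d) :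
    IsLinearDiagram l.length d (blocks l) := by
  refine ⟨?_, ?_, fun x hx ↦ ?_⟩
  · simp [blocks, card_positions, hl]
  · simp only [blocks, forall_mem_image, mem_positions]
    rintro a - _ ⟨j, hj, rfl⟩
    have := (List.getElem?_eq_some_iff.1 hj).1
    exact mem_Icc.2 ⟨by omega, by omega⟩
  · obtain ⟨j, rfl⟩ := Nat.exists_eq_add_of_le' (mem_Icc.1 hx).1
    have hj := List.getElem?_eq_getElem (mem_Icc.1 hx).2
    refine ⟨positions l _, ⟨by simp [blocks], succ_mem_positions.2 hj⟩, ?_⟩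
    simp only [blocks, mem_image, mem_univ, true_and]
    rintro _ ⟨⟨a, rfl⟩, ha⟩
    rw [succ_mem_positions, hj, Option.some_inj] at ha
    rw [ha]

lemma linLoops_blocks (l : List ι) : linLoops l.length (blocks l) = wordLoops l := by
  have loop_set : {i | 1 ≤ i ∧ i + 1 ≤ l.length ∧ ∃ b ∈ blocks l, i ∈ b ∧ i + 1 ∈ b} =
      (({j ∈ range l.length | l[j]? = l[j + 1]?}.image (· + 1) : Finset ℕ) : Set ℕ) := by
    ext i
    cases i with
    | zero => simp
    | succ j =>
      simp only [blocks, Set.mem_ofPred_eq, mem_image, mem_univ, true_and, exists_exists_eq_and,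
        succ_mem_positions, coe_image, coe_filter, mem_range, Set.mem_image,
        Nat.add_right_cancel_iff, exists_eq_right]
      constructor
      · rintro ⟨-, hj, a, h, h'⟩
        exact ⟨by omega, h.trans h'.symm⟩
      · rintro ⟨hj, h⟩
        have hj' := List.getElem?_eq_getElem hj
        have hlt := (List.getElem?_eq_some_iff.1 (h.symm.trans hj')).1
        exact ⟨by omega, hlt, _, hj', h.symm.trans hj'⟩
  rw [linLoops, loop_set, Set.ncard_coe_finset, card_image_of_injective _ (add_left_injective 1),
    card_loop_positions_eq_wordLoops]

lemma mem_words_nsmul_univ {d : ℕ} {l : List ι} :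
    l ∈ words (d • (univ : Finset ι).val) ↔ ∀ a, l.count a = d := by
  simp [Multiset.ext, Multiset.count_nsmul]

lemma length_of_mem_words_nsmul_univ {d : ℕ} {l : List ι}
    (hl : l ∈ words (d • (univ : Finset ι).val)) : l.length = Fintype.card ι * d := by
  rw [← Multiset.coe_card, mem_words.1 hl, Multiset.card_nsmul, card_val, card_univ, mul_comm]

variable {d : ℕ} {P : Finset (Finset ℕ)}

lemma exists_equiv_eq_positions {l : List ι} (hP : #P = Fintype.card ι) (hl : blocks l = P) :
    ∃ e : ι ≃ P, ∀ a, (e a : Finset ℕ) = positions l a := by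
  subst hl
  let f (a : ι) : blocks l := ⟨positions l a, mem_image_of_mem _ (mem_univ a)⟩
  have hf : Function.Bijective f := by
    refine (Fintype.bijective_iff_surjective_and_card f).2 ⟨?_, by simp [hP]⟩
    rintro ⟨b, hb⟩
    obtain ⟨a, -, rfl⟩ := mem_image.1 hb
    exact ⟨a, rfl⟩
  exact ⟨Equiv.ofBijective f hf, fun _ ↦ rfl⟩

lemma card_words_filter_blocks_eq (hd : 0 < d) (hP : IsLinearDiagram (Fintype.card ι * d) d P) :
    #{l ∈ words (d • (univ : Finset ι).val) | blocks l = P} = (Fintype.card ι).factorial := by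
  have hcard : Fintype.card ι = Fintype.card P := by
    simpa using (Nat.eq_of_mul_eq_mul_right hd hP.card_mul).symm
  have labelled (e : ι ≃ P) : ∃ l : List ι, positions l = fun a ↦ (e a : Finset ℕ) := by
    refine exists_positions_eq (fun a x ↦ hP.2.1 _ (e a).2 x) fun x hx ↦ ?_
    obtain ⟨b, ⟨hb, hxb⟩, -⟩ := hP.2.2 x hx
    refine ⟨e.symm ⟨b, hb⟩, by simpa using hxb, fun a ha ↦ ?_⟩
    rw [Equiv.eq_symm_apply]
    exact Subtype.ext (hP.eq_of_mem (e a).2 hb ha hxb)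
  choose word positions_word using labelled
  rw [← Fintype.card_equiv (Fintype.equivOfCardEq hcard), ← card_univ]
  symm
  refine card_bij (fun e _ ↦ word e) (fun e _ ↦ ?_) (fun e _ e' _ h ↦ ?_) fun l hl ↦ ?_
  · rw [mem_filter, mem_words_nsmul_univ]
    refine ⟨fun a ↦ ?_, ?_⟩
    · rw [← card_positions, positions_word, hP.1 _ (e a).2]
    · ext b
      rw [blocks, positions_word, mem_image]
      exact ⟨fun ⟨a, _, ha⟩ ↦ ha ▸ (e a).2, fun hb ↦ ⟨e.symm ⟨b, hb⟩, mem_univ _, by simp⟩⟩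
  · ext1 a
    exact Subtype.ext (congrFun ((positions_word e).symm.trans (h ▸ positions_word e')) a)
  · obtain ⟨e, he⟩ := exists_equiv_eq_positions (by simpa using hcard.symm) (mem_filter.1 hl).2
    exact ⟨e, mem_univ _, positions_injective ((positions_word e).trans (funext he))⟩

lemma card_words_filter_wordLoops_eq (hd : 0 < d) (k : ℕ) :
    #{l ∈ words (d • (univ : Finset ι).val) | wordLoops l = k} =
      numA d (Fintype.card ι) k * (Fintype.card ι).factorial := by
  set W := words (d • (univ : Finset ι).val)
  have diagram {l : List ι} (hl : l ∈ W) :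
      IsLinearDiagram (Fintype.card ι * d) d (blocks l) ∧
        linLoops (Fintype.card ι * d) (blocks l) = wordLoops l := by
    rw [← length_of_mem_words_nsmul_univ hl]
    exact ⟨isLinearDiagram_blocks (mem_words_nsmul_univ.1 hl), linLoops_blocks l⟩
  have diagrams : {P | IsLinearDiagram (Fintype.card ι * d) d P ∧
      linLoops (Fintype.card ι * d) P = k} = ({l ∈ W | wordLoops l = k}.image blocks : Set _) := by
    ext P
    simp only [Set.mem_ofPred_eq, coe_image, coe_filter, Set.mem_image]
    constructor
    · rintro ⟨hP, hk⟩
      obtain ⟨l, hl⟩ : {l ∈ W | blocks l = P}.Nonempty := by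
        rw [← card_pos, card_words_filter_blocks_eq hd hP]
        exact Nat.factorial_pos _
      obtain ⟨hlW, rfl⟩ := mem_filter.1 hl
      exact ⟨l, ⟨hlW, (diagram hlW).2 ▸ hk⟩, rfl⟩
    · rintro ⟨l, ⟨hl, rfl⟩, rfl⟩
      exact diagram hl
  rw [numA, diagrams, Set.ncard_coe_finset, card_eq_sum_card_image blocks]
  refine sum_const_nat fun P hP ↦ ?_
  obtain ⟨l, hl, rfl⟩ := mem_image.1 hP
  obtain ⟨hlW, rfl⟩ := mem_filter.1 hl
  rw [← card_words_filter_blocks_eq hd (diagram hlW).1, filter_filter]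
  refine congrArg card (filter_congr fun l' hl' ↦ and_iff_right_of_imp fun h ↦ ?_)
  rw [← (diagram hl').2, ← (diagram hlW).2, h]

end Blocks

section PowCoeff

variable {R : Type*} [CommSemiring R]

lemma coeff_zero_pow (f : R[X]) (n : ℕ) : (f ^ n).coeff 0 = f.coeff 0 ^ n :=
  constantCoeff.map_pow f n

lemma coeff_one_pow (f : R[X]) (n : ℕ) :
    (f ^ n).coeff 1 = n * f.coeff 0 ^ (n - 1) * f.coeff 1 := by
  rw [← Polynomial.coeff_coe, Polynomial.coe_pow, PowerSeries.coeff_one_pow,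
    Polynomial.coeff_coe, Polynomial.constantCoeff_coe, mul_right_comm]

lemma coeff_two_pow (f : R[X]) (n : ℕ) :
    (f ^ n).coeff 2 = n * f.coeff 0 ^ (n - 1) * f.coeff 2 +
      n.choose 2 * f.coeff 0 ^ (n - 2) * f.coeff 1 ^ 2 := by
  induction n with
  | zero => simp [coeff_one]
  | succ n ih =>
    have antidiagonal_two : antidiagonal 2 = {(0, 2), (1, 1), (2, 0)} := rfl
    rw [pow_succ, coeff_mul, antidiagonal_two, sum_insert (by decide), sum_pair (by decide),
      coeff_zero_pow, coeff_one_pow, ih, Nat.choose_succ_succ', Nat.choose_one_right]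
    rcases n with _ | _ | n
    · simp
    · simp only [zero_add, pow_one, Nat.cast_one, Nat.cast_zero, Nat.sub_self, pow_zero,
        Nat.choose_succ_self, Nat.add_one_sub_one, Nat.cast_ofNat, Nat.reduceAdd, Nat.reduceSub]
      ring
    · simp only [Nat.add_sub_cancel]
      push_cast
      ring

end PowCoeff

-- `swap` makes the variable `x` marking loops the outer one, so that `coeff k` extracts `xᵏ`.
theorem numA_mul_factorial {d : ℕ} (hd : 0 < d) (n k : ℕ) :
    (numA d n k : ℚ) * n.factorial =
      expMoment ℚ ((swap (runPoly (X - 1 : ℚ[X]) d) ^ n).coeff k) := by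
  have words_count := card_words_filter_wordLoops_eq (ι := Fin n) hd k
  rw [Fintype.card_fin] at words_count
  have content : contentPoly (X - 1 : ℚ[X]) (d • (univ : Finset (Fin n)).val) =
      runPoly (X - 1) d ^ n := by
    simp [contentPoly, Multiset.count_nsmul]
  rw [← map_pow, ← coeff_expMoment, ← content, ← sum_words_pow_wordLoops, finsetSum_coeff,
    ← Nat.cast_mul, ← words_count]
  simp [coeff_X_pow, eq_comm]

/-- The coefficient of `x⁰` in `runPoly (x - 1) 3`, weighting the
blocks of size `3` without a loop. -/
noncomputable def tripleWeight₀ : ℚ[X] := C (1 / 6) * X ^ 3 - X ^ 2 + X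

/-- The coefficient of `x¹` in `runPoly (x - 1) 3`, weighting the
blocks of size `3` with one loop. -/
noncomputable def tripleWeight₁ : ℚ[X] := X ^ 2 - 2 * X

lemma runPoly_three {R : Type*} [CommRing R] [Algebra ℚ R] (y : R) :
    runPoly y 3 = C (y ^ 2) * X + C y * X ^ 2 + C (algebraMap ℚ R (1 / 6)) * X ^ 3 := by
  rw [runPoly, sum_range_succ, sum_range_succ, sum_range_one]
  norm_num [Nat.factorial, -RingHom.map_rat_algebraMap]

lemma swap_runPoly_three : swap (runPoly (X - 1 : ℚ[X]) 3) =
    C tripleWeight₀ + C tripleWeight₁ * X + C X * X ^ 2 := by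
  simp only [runPoly_three, tripleWeight₀, tripleWeight₁, algebraMap_eq, map_add, map_sub,
    map_mul, map_pow, map_one, map_ofNat, swap_C, swap_Y, map_X, map_C]
  ring

lemma coeff_zero_swap_runPoly_three :
    (swap (runPoly (X - 1 : ℚ[X]) 3)).coeff 0 = tripleWeight₀ := by
  simp [swap_runPoly_three]

lemma coeff_one_swap_runPoly_three :
    (swap (runPoly (X - 1 : ℚ[X]) 3)).coeff 1 = tripleWeight₁ := by
  simp [swap_runPoly_three, coeff_C]

lemma coeff_two_swap_runPoly_three :
    (swap (runPoly (X - 1 : ℚ[X]) 3)).coeff 2 = X := by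
  simp [swap_runPoly_three]

lemma numA_three_zero_mul_factorial (n : ℕ) :
    (numA 3 n 0 : ℚ) * n.factorial = expMoment ℚ (tripleWeight₀ ^ n) := by
  rw [numA_mul_factorial three_pos, coeff_zero_pow, coeff_zero_swap_runPoly_three]

lemma numA_three_one_mul_factorial (n : ℕ) :
    (numA 3 n 1 : ℚ) * n.factorial =
      n * expMoment ℚ (tripleWeight₀ ^ (n - 1) * tripleWeight₁) := by
  rw [numA_mul_factorial three_pos, coeff_one_pow, coeff_zero_swap_runPoly_three,
    coeff_one_swap_runPoly_three, ← C_eq_natCast, mul_assoc, expMoment_C_mul]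

lemma numA_three_two_mul_factorial (n : ℕ) :
    (numA 3 n 2 : ℚ) * n.factorial = n * expMoment ℚ (tripleWeight₀ ^ (n - 1) * X) +
      n.choose 2 * expMoment ℚ (tripleWeight₀ ^ (n - 2) * tripleWeight₁ ^ 2) := by
  rw [numA_mul_factorial three_pos, coeff_two_pow, coeff_zero_swap_runPoly_three,
    coeff_one_swap_runPoly_three, coeff_two_swap_runPoly_three, ← C_eq_natCast, ← C_eq_natCast,
    mul_assoc, mul_assoc, map_add, expMoment_C_mul, expMoment_C_mul]

lemma coeff_zero_tripleWeight₀ : tripleWeight₀.coeff 0 = 0 := by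
  simp [tripleWeight₀]

lemma derivative_tripleWeight₀ : derivative tripleWeight₀ = C (1 / 2) * X ^ 2 - 2 * X + 1 := by
  refine Polynomial.funext fun t ↦ ?_
  simp only [tripleWeight₀, derivative_sub, derivative_mul, derivative_C, derivative_X,
    derivative_X_pow_succ, Nat.cast_one, Nat.cast_ofNat, map_add, map_one, eval_add,
    eval_sub, eval_mul, eval_pow, eval_C, eval_X, eval_zero, eval_one, eval_ofNat]
  ring

lemma expMoment_eq_of_sub_eq_sub_derivative {R : Type*} [CommRing R] {f g h : R[X]}
    (hh : h.coeff 0 = 0) (hfg : f - g = h - derivative h) : expMoment R f = expMoment R g := by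
  rw [← sub_eq_zero, ← map_sub, hfg, map_sub, ← expMoment_derivative h, hh, add_zero, sub_self]

/-- The multiplier `r` for which the derivative of `tripleWeight₀ ^ (m + 1) * r` relates the
moments of the recurrence at `n = m + 2`; it solves the linear system obtained from a cubic
`r` with undetermined coefficients. -/
noncomputable def tripleMultiplier (m : ℚ) : ℚ[X] :=
  C (2 * (m + 2)) + C (3 * m + 4) * X - C m * X ^ 2 - C (1 / 3) * X ^ 3

lemma derivative_tripleMultiplier (m : ℚ) :
    derivative (tripleMultiplier m) = C (3 * m + 4) - C (2 * m) * X - X ^ 2 := by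
  refine Polynomial.funext fun t ↦ ?_
  simp only [tripleMultiplier, derivative_sub, derivative_mul, derivative_C, derivative_X,
    derivative_X_pow_succ, Nat.cast_one, Nat.cast_ofNat, map_add, map_one, eval_add,
    eval_sub, eval_mul, eval_pow, eval_C, eval_X, eval_zero, eval_one]
  ring

lemma expMoment_tripleWeight_rec (m : ℕ) :
    (m + 2) * expMoment ℚ (tripleWeight₀ ^ (m + 1) * X) +
        (m + 2) * (m + 1) / 2 * expMoment ℚ (tripleWeight₀ ^ m * tripleWeight₁ ^ 2) =
      2 * expMoment ℚ (tripleWeight₀ ^ (m + 2)) +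
        (9 * m + 8) * (m + 2) * expMoment ℚ (tripleWeight₀ ^ (m + 1)) +
        5 * ((m + 2) * (m + 1)) * expMoment ℚ (tripleWeight₀ ^ m * tripleWeight₁) +
        2 * ((m + 2) * (m + 1)) * expMoment ℚ (tripleWeight₀ ^ m) := by
  simp only [← expMoment_C_mul, ← map_add (expMoment ℚ)]
  have coeff_zero : (tripleWeight₀ ^ (m + 1) * tripleMultiplier m).coeff 0 = 0 := by
    rw [mul_coeff_zero, coeff_zero_pow, coeff_zero_tripleWeight₀, zero_pow m.succ_ne_zero, zero_mul]
  refine expMoment_eq_of_sub_eq_sub_derivative coeff_zero ?_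
  rw [derivative_mul, derivative_pow_succ, derivative_tripleWeight₀, derivative_tripleMultiplier]
  refine Polynomial.funext fun t ↦ ?_
  simp only [tripleWeight₀, tripleWeight₁, tripleMultiplier, eval_add, eval_sub, eval_mul,
    eval_pow, eval_C, eval_X, eval_ofNat, eval_one]
  ring

/-- for `d = 3` and `n ≥ 2`,
`a(n,2) = 2·a(n,0) + (9n−10)·a(n−1,0) + 5·a(n−1,1) + 2·a(n−2,0)`. -/
theorem linear_rec_three_two (n : ℕ) (hn : 2 ≤ n) :
    numA 3 n 2 = 2 * numA 3 n 0 + (9 * n - 10) * numA 3 (n - 1) 0 +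
      5 * numA 3 (n - 1) 1 + 2 * numA 3 (n - 2) 0 := by
  obtain ⟨m, rfl⟩ := Nat.exists_eq_add_of_le' hn
  have a₀ := numA_three_zero_mul_factorial (m + 2)
  have a₀' := numA_three_zero_mul_factorial (m + 1)
  have a₀'' := numA_three_zero_mul_factorial m
  have a₁' := numA_three_one_mul_factorial (m + 1)
  have a₂ := numA_three_two_mul_factorial (m + 2)
  simp only [Nat.factorial_succ, Nat.cast_choose_two, Nat.add_sub_cancel,
    show m + 2 - 1 = m + 1 by rfl] at a₀ a₀' a₁' a₂
  push_cast at a₀ a₀' a₁' a₂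
  rw [show m + 2 - 1 = m + 1 by rfl, Nat.add_sub_cancel,
    show 9 * (m + 2) - 10 = 9 * m + 8 by omega]
  suffices (numA 3 (m + 2) 2 : ℚ) = 2 * numA 3 (m + 2) 0 +
      (9 * m + 8) * numA 3 (m + 1) 0 + 5 * numA 3 (m + 1) 1 + 2 * numA 3 m 0 by
    exact_mod_cast this
  have factor_ne_zero : (m + 2 : ℚ) * (m + 1) * m.factorial ≠ 0 := by positivity
  refine mul_right_cancel₀ factor_ne_zero ?_
  linear_combination a₂ + expMoment_tripleWeight_rec m - 2 * a₀ -
    (9 * m + 8) * (m + 2) * a₀' - 5 * (m + 2) * a₁' - 2 * (m + 2) * (m + 1) * a₀''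
end
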